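/- Let d ≥ 1, 2 < p ≤ ∞, 0 < γ < 2d(1/2 − 1/p) and a > 0. There is a constant C depending only on d, γ, p and a such that for all Schwartz functions f₁, f₂, f₃ on ℝ^d, ‖H_{a,γ}(f₁, f₂, f₃)‖_{L̂^p} ≤ C ‖f₁‖_{L̂^p} ‖f₂‖_{L̂^p} ‖f₃‖_{L̂^p}. -/

import Mathlib

open MeasureTheory Real FourierTransform
open scoped ENNReal

/-- The Hartree trilinear operator
`H_{a,γ}(f,g,h)(x) = ((e^{-a|·|} |·|^{-γ}) ∗ (f ḡ))(x) · h(x)` on `ℝ^d`. -/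
noncomputable def hartreeOp (d : ℕ) (a γ : ℝ)
    (f g h : EuclideanSpace ℝ (Fin d) → ℂ) : EuclideanSpace ℝ (Fin d) → ℂ :=
  fun x =>
    (∫ y : EuclideanSpace ℝ (Fin d),
      ((Real.exp (-(a * ‖y‖)) * ‖y‖ ^ (-γ) : ℝ) : ℂ) *
        (f (x - y) * (starRingEnd ℂ) (g (x - y)))) * h x

/-!
Write `K = e^{-a|·|} |·|^{-γ}`, `u = f ḡ` and `q = p'`. The Fourier transform of `(K ∗ u) h` is
`(K̂ û) ∗ ĥ`, so Young's inequality `L¹ ∗ L^q ⊆ L^q` reduces the estimate to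
`∫ |K̂| |û| ≤ C ‖f̂‖_q ‖ĝ‖_q`, where `|û|` is at most the convolution of `|f̂|` with the reflection
of `|ĝ|`.

The kernel `K` is a superposition of Gaussians `e^{-b|x|²}`: write
`|x|^{-γ} e^{-a|x|} = Γ(γ)⁻¹ ∫₀^∞ s^{γ-1} e^{-(s+a)|x|} ds` and `e^{-t} = 𝔼 exp(-t² / (2Z²))` with
`Z` standard normal. For a single Gaussian, the trilinear Young inequality gives the constant
`(π / b)^κ` with `κ = d (1/q - 1/2)`, and the integral of `b^{-κ}` over the mixing measure is finite
because `γ < 2κ`.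
-/

section Young

variable {G : Type*} [AddCommGroup G] [MeasurableSpace G] [MeasurableAdd₂ G] [MeasurableNeg G]
  {μ : Measure G} {f g h : G → ℝ≥0∞}

theorem lconvolution_rpow_le (hf : Measurable f) (hg : Measurable g) {q : ℝ} (hq : 1 ≤ q)
    (x : G) :
    (f ⋆ₗ[μ] g) x ^ q ≤ (∫⁻ y, f y ∂μ) ^ (q - 1) * (f ⋆ₗ[μ] fun y => g y ^ q) x := by
  have hq₀ : 0 < q := by linarith
  have hq_inv : 0 ≤ q⁻¹ := by positivity
  have hq_conj : 0 ≤ 1 - q⁻¹ := sub_nonneg.2 (inv_le_one_of_one_le₀ hq)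
  have hfactor (y : G) :
      f y ^ (1 - q⁻¹) * (f y * g (-y + x) ^ q) ^ q⁻¹ = f y * g (-y + x) := by
    rw [ENNReal.mul_rpow_of_nonneg _ _ hq_inv, ← mul_assoc,
      ← ENNReal.rpow_add_of_nonneg _ _ hq_conj hq_inv, ENNReal.rpow_rpow_inv hq₀.ne',
      sub_add_cancel, ENNReal.rpow_one]
  have hölder := ENNReal.lintegral_mul_norm_pow_le (μ := μ) (g := fun y => f y * g (-y + x) ^ q)
    hf.aemeasurable (by fun_prop) hq_conj hq_inv (sub_add_cancel _ _)
  simp only [hfactor] at hölder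
  refine (ENNReal.rpow_le_rpow hölder hq₀.le).trans_eq ?_
  rw [ENNReal.mul_rpow_of_nonneg _ _ hq₀.le, ENNReal.rpow_inv_rpow hq₀.ne', ← ENNReal.rpow_mul,
    show (1 - q⁻¹) * q = q - 1 by field_simp]
  rfl

variable [SFinite μ] [μ.IsAddLeftInvariant]

theorem lintegral_lconvolution (hf : Measurable f) (hg : Measurable g) :
    ∫⁻ x, (f ⋆ₗ[μ] g) x ∂μ = (∫⁻ x, f x ∂μ) * ∫⁻ x, g x ∂μ := by
  simp only [lconvolution_def]
  rw [lintegral_lintegral_swap (by unfold Function.uncurry; fun_prop),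
    ← lintegral_mul_const _ hf]
  refine lintegral_congr fun y => ?_
  rw [lintegral_const_mul _ (by fun_prop), lintegral_add_left_eq_self g (-y)]

theorem eLpNorm_lconvolution_le (hf : Measurable f) (hg : Measurable g) {q : ℝ≥0∞}
    (hq : 1 ≤ q) (hq_top : q ≠ ∞) :
    eLpNorm (f ⋆ₗ[μ] g) q μ ≤ (∫⁻ x, f x ∂μ) * eLpNorm g q μ := by
  have hq₁ : 1 ≤ q.toReal := ENNReal.toReal_mono hq_top hq
  have hq₀ : 0 < q.toReal := by linarith
  simp only [eLpNorm_eq_lintegral_rpow_enorm_toReal (one_pos.trans_le hq).ne' hq_top, enorm_eq_self,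
    one_div]
  rw [ENNReal.rpow_inv_le_iff hq₀, ENNReal.mul_rpow_of_nonneg _ _ hq₀.le,
    ENNReal.rpow_inv_rpow hq₀.ne']
  calc ∫⁻ x, (f ⋆ₗ[μ] g) x ^ q.toReal ∂μ
      ≤ ∫⁻ x, (∫⁻ y, f y ∂μ) ^ (q.toReal - 1) * (f ⋆ₗ[μ] fun y => g y ^ q.toReal) x ∂μ :=
        lintegral_mono (lconvolution_rpow_le hf hg hq₁)
    _ = (∫⁻ y, f y ∂μ) ^ (q.toReal - 1) * ((∫⁻ y, f y ∂μ) * ∫⁻ y, g y ^ q.toReal ∂μ) := by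
        rw [lintegral_const_mul _ (measurable_lconvolution μ hf (by fun_prop)),
          lintegral_lconvolution hf (by fun_prop)]
    _ = (∫⁻ y, f y ∂μ) ^ q.toReal * ∫⁻ y, g y ^ q.toReal ∂μ := by
        rw [← mul_assoc]
        nth_rewrite 2 [← ENNReal.rpow_one (∫⁻ y, f y ∂μ)]
        rw [← ENNReal.rpow_add_of_nonneg _ _ (by linarith) zero_le_one, sub_add_cancel]

variable [μ.IsNegInvariant]

theorem lintegral_prod_mul_rpow_le (hf : Measurable f) (hg : Measurable g) (hh : Measurable h)
    {a b c : ℝ} (ha : 0 ≤ a) (hb : 0 ≤ b) (hc : 0 ≤ c) (habc : a + b + c = 1) :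
    ∫⁻ z, (g (-z.2 + z.1) * h z.1) ^ a * (f z.2 * h z.1) ^ b * (f z.2 * g (-z.2 + z.1)) ^ c
        ∂μ.prod μ ≤
      ((∫⁻ x, g x ∂μ) * ∫⁻ x, h x ∂μ) ^ a * ((∫⁻ x, f x ∂μ) * ∫⁻ x, h x ∂μ) ^ b *
        ((∫⁻ x, f x ∂μ) * ∫⁻ x, g x ∂μ) ^ c := by
  have hölder := ENNReal.lintegral_prod_norm_pow_le (μ := μ.prod μ) Finset.univ
    (f := ![fun z => g (-z.2 + z.1) * h z.1, fun z => f z.2 * h z.1,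
      fun z => f z.2 * g (-z.2 + z.1)])
    (fun i _ => by
      fin_cases i <;> simp only [Fin.zero_eta, Fin.mk_one, Fin.reduceFinMk, Matrix.cons_val_zero,
        Matrix.cons_val_one, Matrix.cons_val] <;> fun_prop)
    (p := ![a, b, c]) (by simpa [Fin.sum_univ_three] using habc)
    (fun i _ => by fin_cases i <;> simpa)
  simp only [Fin.prod_univ_three, Matrix.cons_val_zero, Matrix.cons_val_one,
    Matrix.cons_val] at hölder
  have hgh : ∫⁻ z, g (-z.2 + z.1) * h z.1 ∂μ.prod μ = (∫⁻ x, g x ∂μ) * ∫⁻ x, h x ∂μ := by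
    rw [lintegral_prod _ (by fun_prop), ← lintegral_const_mul _ hh]
    refine lintegral_congr fun x => ?_
    dsimp only
    rw [lintegral_mul_const _ (by fun_prop), lintegral_neg_eq_self (fun y => g (y + x)),
      lintegral_add_right_eq_self g x]
  have hfh : ∫⁻ z, f z.2 * h z.1 ∂μ.prod μ = (∫⁻ x, f x ∂μ) * ∫⁻ x, h x ∂μ := by
    simp only [mul_comm (f _), mul_comm (lintegral μ f)]
    exact lintegral_prod_mul hh.aemeasurable hf.aemeasurable
  have hfg : ∫⁻ z, f z.2 * g (-z.2 + z.1) ∂μ.prod μ = (∫⁻ x, f x ∂μ) * ∫⁻ x, g x ∂μ := by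
    rw [lintegral_prod _ (by fun_prop)]
    exact lintegral_lconvolution hf hg
  rwa [hgh, hfh, hfg] at hölder

theorem lintegral_rpow_mul_lconvolution_rpow_le (hf : Measurable f) (hg : Measurable g)
    (hh : Measurable h) {α β δ : ℝ} (hα : α ≤ 1) (hβ : β ≤ 1) (hδ : δ ≤ 1)
    (hsum : α + β + δ = 2) :
    ∫⁻ x, h x ^ δ * ((fun y => f y ^ α) ⋆ₗ[μ] fun y => g y ^ β) x ∂μ ≤
      (∫⁻ x, h x ∂μ) ^ δ * ((∫⁻ x, f x ∂μ) ^ α * (∫⁻ x, g x ∂μ) ^ β) := by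
  have hα' := sub_nonneg.2 hα
  have hβ' := sub_nonneg.2 hβ
  have hδ' := sub_nonneg.2 hδ
  have regroup (u v w : ℝ≥0∞) : (v * w) ^ (1 - α) * (u * w) ^ (1 - β) * (u * v) ^ (1 - δ) =
      w ^ δ * (u ^ α * v ^ β) := by
    rw [ENNReal.mul_rpow_of_nonneg _ _ hα', ENNReal.mul_rpow_of_nonneg _ _ hβ',
      ENNReal.mul_rpow_of_nonneg _ _ hδ', show w ^ δ = w ^ (1 - α) * w ^ (1 - β) by
        rw [← ENNReal.rpow_add_of_nonneg _ _ hα' hβ']; congr 1; linarith,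
      show u ^ α = u ^ (1 - β) * u ^ (1 - δ) by
        rw [← ENNReal.rpow_add_of_nonneg _ _ hβ' hδ']; congr 1; linarith,
      show v ^ β = v ^ (1 - α) * v ^ (1 - δ) by
        rw [← ENNReal.rpow_add_of_nonneg _ _ hα' hδ']; congr 1; linarith]
    ring
  have hölder := lintegral_prod_mul_rpow_le (μ := μ) hf hg hh hα' hβ' hδ' (by linarith)
  simp only [regroup] at hölder
  rw [lintegral_prod _ (by fun_prop)] at hölder
  simp only [lconvolution_def]
  refine le_of_eq_of_le (lintegral_congr fun x => ?_) hölder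
  exact (lintegral_const_mul _ (by fun_prop)).symm

end Young

section Fourier

open scoped RealInnerProductSpace ComplexConjugate

variable {E F : Type*} [NormedAddCommGroup E] [InnerProductSpace ℝ E] [FiniteDimensional ℝ E]
  [MeasurableSpace E] [BorelSpace E] [NormedAddCommGroup F] [NormedSpace ℂ F]

theorem continuous_fourier_of_integrable {f : E → F} (hf : Integrable f) : Continuous (𝓕 f) :=
  VectorFourier.fourierIntegral_continuous Real.continuous_fourierChar
    (L := innerₗ E) (by exact continuous_inner) hf

theorem fourier_fourierChar_smul (f : E → F) (w ξ : E) :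
    𝓕 (fun x => 𝐞 ⟪x, w⟫ • f x) ξ = 𝓕 f (ξ - w) := by
  simp only [Real.fourier_eq, smul_smul, ← AddChar.map_add_eq_mul, inner_sub_right, neg_sub,
    neg_add_eq_sub]

theorem fourier_conj (f : E → ℂ) (ξ : E) : 𝓕 (fun x => conj (f x)) ξ = conj (𝓕 f (-ξ)) := by
  simp only [Real.fourier_eq, ← integral_conj, Circle.smul_def, smul_eq_mul, map_mul,
    inner_neg_right, neg_neg, Circle.starRingEnd_addChar]

variable [CompleteSpace F]

theorem integral_fourier_smul_eq {f : E → ℂ} {g : E → F} (hf : Integrable f) (hg : Integrable g) :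
    ∫ x, 𝓕 f x • g x = ∫ x, f x • 𝓕 g x :=
  (VectorFourier.integral_fourierIntegral_smul_eq_flip (L := innerₗ E) Real.continuous_fourierChar
    (by exact continuous_inner) hf hg).trans (by rw [flip_innerₗ]; rfl)

theorem fourier_fourierInv_smul {f : E → ℂ} {g : E → F} (hf : Integrable f) (hg : Integrable g)
    (ξ : E) : 𝓕 (fun x => 𝓕⁻ f x • g x) ξ = ∫ η, f η • 𝓕 g (ξ - η) := by
  have hg' : Integrable fun x => 𝐞 ⟪x, -ξ⟫ • g x := by
    simpa only [inner_neg_right] using (Real.fourierIntegral_convergent_iff ξ).2 hg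
  calc 𝓕 (fun x => 𝓕⁻ f x • g x) ξ
      = ∫ x, 𝓕 (fun η => f (-η)) x • 𝐞 ⟪x, -ξ⟫ • g x := by
        simp only [Real.fourier_eq _ ξ, Real.fourierInv_eq_fourier_comp_neg, inner_neg_right,
          smul_comm (𝐞 _)]
    _ = ∫ η, f (-η) • 𝓕 g (η + ξ) := by
        simp only [integral_fourier_smul_eq hf.comp_neg hg', fourier_fourierChar_smul,
          sub_neg_eq_add]
    _ = ∫ η, f η • 𝓕 g (ξ - η) := by
        rw [← integral_neg_eq_self]
        simp only [neg_neg, neg_add_eq_sub]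

theorem integral_smul_fourierInv_sub {f : E → ℂ} {g : E → F} (hf : Integrable f)
    (hg : Integrable g) (x : E) :
    ∫ y, f y • 𝓕⁻ g (x - y) = 𝓕⁻ (fun η => 𝓕 f η • g η) x := by
  have hg' : Integrable fun η => 𝐞 ⟪η, x⟫ • g η := by
    simpa only [inner_neg_right, neg_neg] using (Real.fourierIntegral_convergent_iff (-x)).2 hg
  calc ∫ y, f y • 𝓕⁻ g (x - y)
      = ∫ y, f y • 𝓕 (fun η => 𝐞 ⟪η, x⟫ • g η) y := by
        simp only [fourier_fourierChar_smul, Real.fourierInv_eq_fourier_neg, neg_sub]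
    _ = 𝓕⁻ (fun η => 𝓕 f η • g η) x := by
        simp only [← integral_fourier_smul_eq hf hg', Real.fourierInv_eq, smul_comm (𝐞 _)]

theorem enorm_fourier_fourierInv_smul_le {f : E → ℂ} {g : E → F} (hf : Integrable f)
    (hg : Integrable g) (ξ : E) :
    ‖𝓕 (fun x => 𝓕⁻ f x • g x) ξ‖ₑ ≤ ((‖f ·‖ₑ) ⋆ₗ[volume] fun η => ‖𝓕 g η‖ₑ) ξ := by
  rw [fourier_fourierInv_smul hf hg, lconvolution_def]
  simp only [neg_add_eq_sub, ← enorm_smul]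
  exact enorm_integral_le_lintegral_enorm _

end Fourier

section Schwartz

open scoped ComplexConjugate SchwartzMap

/-- The product `f ḡ` that the Hartree operator convolves with its potential, as a Schwartz
function. -/
noncomputable def schwartzMulConj {X : Type*} [NormedAddCommGroup X] [NormedSpace ℝ X]
    (f g : 𝓢(X, ℂ)) : 𝓢(X, ℂ) :=
  SchwartzMap.pairing (ContinuousLinearMap.mul ℝ ℂ) f
    (SchwartzMap.postcompCLM (Complex.conjCLE : ℂ →L[ℝ] ℂ) g)

theorem coe_schwartzMulConj {X : Type*} [NormedAddCommGroup X] [NormedSpace ℝ X]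
    (f g : 𝓢(X, ℂ)) :
    ⇑(schwartzMulConj f g) = fun x => f x * conj (g x) := rfl

variable {E F : Type*} [NormedAddCommGroup E] [InnerProductSpace ℝ E] [FiniteDimensional ℝ E]
  [MeasurableSpace E] [BorelSpace E] [NormedAddCommGroup F] [NormedSpace ℂ F]

theorem integrable_fourier_schwartz (f : 𝓢(E, F)) : Integrable (𝓕 (⇑f)) := by
  rw [← SchwartzMap.fourier_coe]
  exact SchwartzMap.integrable _

variable [CompleteSpace F]

theorem fourierInv_fourier_schwartz (f : 𝓢(E, F)) : 𝓕⁻ (𝓕 (⇑f)) = f := by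
  rw [← SchwartzMap.fourier_coe, ← SchwartzMap.fourierInv_coe,
    FourierTransform.fourierInv_fourier_eq]

theorem enorm_fourier_schwartzMulConj_le (f g : 𝓢(E, ℂ)) (ξ : E) :
    ‖𝓕 (⇑(schwartzMulConj f g)) ξ‖ₑ ≤
      ((fun η => ‖𝓕 (⇑f) η‖ₑ) ⋆ₗ[volume] fun η => ‖𝓕 (⇑g) (-η)‖ₑ) ξ := by
  have hconj : Integrable fun x => conj (g x) :=
    Complex.conjCLE.toContinuousLinearMap.integrable_comp g.integrable
  simpa only [coe_schwartzMulConj, fourierInv_fourier_schwartz, smul_eq_mul, fourier_conj,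
    RCLike.enorm_conj] using
    enorm_fourier_fourierInv_smul_le (integrable_fourier_schwartz f) hconj ξ

theorem enorm_fourier_integral_mul_smul_le {K : E → ℂ} (hK : Integrable K) (u : 𝓢(E, ℂ))
    {h : E → F} (hh : Integrable h) (ξ : E) :
    ‖𝓕 (fun x => (∫ y, K y * u (x - y)) • h x) ξ‖ₑ ≤
      ((fun η => ‖𝓕 K η‖ₑ * ‖𝓕 (⇑u) η‖ₑ) ⋆ₗ[volume] fun η => ‖𝓕 h η‖ₑ) ξ := by
  have hprod : Integrable fun η => 𝓕 K η * 𝓕 (⇑u) η :=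
    (integrable_fourier_schwartz u).bdd_mul (c := ∫ v, ‖K v‖)
      (continuous_fourier_of_integrable hK).aestronglyMeasurable
      (ae_of_all _ fun _ => VectorFourier.norm_fourierIntegral_le_integral_norm _ _ _ _ _)
  have hconv (x : E) : ∫ y, K y * u (x - y) = 𝓕⁻ (fun η => 𝓕 K η * 𝓕 (⇑u) η) x := by
    simpa only [fourierInv_fourier_schwartz, smul_eq_mul] using
      integral_smul_fourierInv_sub hK (integrable_fourier_schwartz u) x
  simpa only [hconv, enorm_mul] using enorm_fourier_fourierInv_smul_le hprod hh ξ

theorem eLpNorm_fourier_integral_mul_smul_le {K : E → ℂ} (hK : Integrable K) (u : 𝓢(E, ℂ))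
    {h : E → F} (hh : Integrable h) {q : ℝ≥0∞} (hq : 1 ≤ q) (hq_top : q ≠ ∞) :
    eLpNorm (𝓕 fun x => (∫ y, K y * u (x - y)) • h x) q ≤
      (∫⁻ η, ‖𝓕 K η‖ₑ * ‖𝓕 (⇑u) η‖ₑ) * eLpNorm (𝓕 h) q := by
  have hK_cont := continuous_fourier_of_integrable hK
  have hu_cont := continuous_fourier_of_integrable (u.integrable (μ := volume))
  have hh_cont := continuous_fourier_of_integrable hh
  refine (eLpNorm_mono_enorm fun ξ => ?_).trans
    ((eLpNorm_lconvolution_le (f := fun η => ‖𝓕 K η‖ₑ * ‖𝓕 (⇑u) η‖ₑ)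
      (by fun_prop) hh_cont.enorm.measurable hq hq_top).trans_eq ?_)
  · exact enorm_fourier_integral_mul_smul_le hK u hh ξ
  · rw [eLpNorm_enorm]

end Schwartz

section GaussianMixture

open Module
open scoped RealInnerProductSpace

theorem lintegral_ofReal_eq_of_integral_eq {X : Type*} [MeasurableSpace X] {μ : Measure X}
    {f : X → ℝ} {c : ℝ} (hf : 0 ≤ᵐ[μ] f) (hc : c ≠ 0) (h : ∫ x, f x ∂μ = c) :
    ∫⁻ x, ENNReal.ofReal (f x) ∂μ = ENNReal.ofReal c := by
  rw [← h, ofReal_integral_eq_lintegral_ofReal (.of_integral_ne_zero (h ▸ hc)) hf]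

variable {E : Type*} [NormedAddCommGroup E]

/-- The superposition `x ↦ ∫ e^{-b|x|²} dm(b)` of Gaussians with mixing measure `m`. -/
noncomputable def gaussianMixture (m : Measure ℝ) (x : E) : ℝ := ∫ b, rexp (-b * ‖x‖ ^ 2) ∂m

variable [InnerProductSpace ℝ E] [FiniteDimensional ℝ E] [MeasurableSpace E] [BorelSpace E]

theorem lintegral_exp_neg_mul_sq_norm {b : ℝ} (hb : 0 < b) :
    ∫⁻ x : E, ENNReal.ofReal (rexp (-b * ‖x‖ ^ 2)) =
      ENNReal.ofReal ((π / b) ^ (finrank ℝ E / 2 : ℝ)) :=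
  lintegral_ofReal_eq_of_integral_eq (ae_of_all _ fun _ => (exp_pos _).le) (by positivity)
    (GaussianFourier.integral_rexp_neg_mul_sq_norm hb)

theorem lintegral_exp_neg_mul_sq_norm_mul_lconvolution_le {f g : E → ℝ≥0∞} (hf : Measurable f)
    (hg : Measurable g) {q : ℝ≥0∞} (hq₁ : 1 ≤ q) (hq₂ : q ≤ 2) {b : ℝ} (hb : 0 < b) :
    ∫⁻ x, ENNReal.ofReal (rexp (-b * ‖x‖ ^ 2)) * (f ⋆ₗ[volume] g) x ≤
      ENNReal.ofReal ((π / b) ^ (finrank ℝ E * (1 - q.toReal⁻¹))) *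
        (eLpNorm f q volume * eLpNorm g q volume) := by
  have hq_top : q ≠ ∞ := ne_top_of_le_ne_top (by simp) hq₂
  have hr₁ : 1 ≤ q.toReal := ENNReal.toReal_mono hq_top hq₁
  have hr₂ : q.toReal ≤ 2 := ENNReal.toReal_mono (by simp) hq₂
  have hr₀ : 0 < q.toReal := by linarith
  have hr_inv : q.toReal⁻¹ ≤ 1 := inv_le_one_of_one_le₀ hr₁
  have hr_inv' : 2⁻¹ ≤ q.toReal⁻¹ := by gcongr
  have young := lintegral_rpow_mul_lconvolution_rpow_le (μ := (volume : Measure E))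
    (hf.pow_const q.toReal) (hg.pow_const q.toReal)
    (h := fun x => ENNReal.ofReal (rexp (-b * ‖x‖ ^ 2))) (by fun_prop)
    hr_inv hr_inv (δ := 2 * (1 - q.toReal⁻¹)) (by linarith) (by ring)
  simp only [ENNReal.rpow_rpow_inv hr₀.ne', lintegral_exp_neg_mul_sq_norm hb] at young
  rw [ENNReal.ofReal_rpow_of_nonneg (by positivity) (by linarith), ← Real.rpow_mul (by positivity),
    show (finrank ℝ E / 2 : ℝ) * (2 * (1 - q.toReal⁻¹)) = finrank ℝ E * (1 - q.toReal⁻¹) by ring]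
    at young
  simp only [eLpNorm_eq_lintegral_rpow_enorm_toReal (one_pos.trans_le hq₁).ne' hq_top,
    enorm_eq_self, one_div]
  have gaussian_le_one (x : E) : ENNReal.ofReal (rexp (-b * ‖x‖ ^ 2)) ≤ 1 := by
    rw [ENNReal.ofReal_le_one, exp_le_one_iff, neg_mul]
    exact neg_nonpos.2 (by positivity)
  refine (lintegral_mono fun x => ?_).trans young
  gcongr
  simpa only [ENNReal.rpow_one] using
    ENNReal.rpow_le_rpow_of_exponent_ge (gaussian_le_one x)
      (show 2 * (1 - q.toReal⁻¹) ≤ 1 by linarith)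

variable {m : Measure ℝ} [SFinite m]

theorem integrable_exp_neg_mul_sq_norm_prod (hm : ∀ᵐ b ∂m, 0 < b)
    (hm_lt : ∫⁻ b, ENNReal.ofReal (b ^ (-(finrank ℝ E / 2 : ℝ))) ∂m < ∞) :
    Integrable (fun z : E × ℝ => rexp (-z.2 * ‖z.1‖ ^ 2)) (volume.prod m) := by
  refine ⟨Measurable.aestronglyMeasurable (by fun_prop), ?_⟩
  rw [hasFiniteIntegral_iff_ofReal (ae_of_all _ fun _ => (exp_pos _).le),
    lintegral_prod_symm _ (by fun_prop)]
  have hgauss : ∀ᵐ b ∂m, ∫⁻ x : E, ENNReal.ofReal (rexp (-b * ‖x‖ ^ 2)) =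
      ENNReal.ofReal (π ^ (finrank ℝ E / 2 : ℝ)) *
        ENNReal.ofReal (b ^ (-(finrank ℝ E / 2 : ℝ))) := by
    filter_upwards [hm] with b hb
    rw [lintegral_exp_neg_mul_sq_norm hb, ← ENNReal.ofReal_mul (by positivity),
      div_rpow pi_pos.le hb.le, rpow_neg hb.le, div_eq_mul_inv]
  rw [lintegral_congr_ae hgauss, lintegral_const_mul _ (by fun_prop)]
  exact ENNReal.mul_lt_top ENNReal.ofReal_lt_top hm_lt

theorem integrable_gaussianMixture (hm : ∀ᵐ b ∂m, 0 < b)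
    (hm_lt : ∫⁻ b, ENNReal.ofReal (b ^ (-(finrank ℝ E / 2 : ℝ))) ∂m < ∞) :
    Integrable (gaussianMixture m : E → ℝ) :=
  (integrable_exp_neg_mul_sq_norm_prod hm hm_lt).integral_prod_left

theorem fourier_gaussianMixture (hm : ∀ᵐ b ∂m, 0 < b)
    (hm_lt : ∫⁻ b, ENNReal.ofReal (b ^ (-(finrank ℝ E / 2 : ℝ))) ∂m < ∞) (ξ : E) :
    𝓕 (fun x : E => (gaussianMixture m x : ℂ)) ξ =
      ∫ b, (((π / b) ^ (finrank ℝ E / 2 : ℝ) * rexp (-(π ^ 2 / b) * ‖ξ‖ ^ 2) : ℝ) : ℂ) ∂m := by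
  have hint : Integrable (fun z : E × ℝ => 𝐞 (-⟪z.1, ξ⟫) • (rexp (-z.2 * ‖z.1‖ ^ 2) : ℂ))
      (volume.prod m) := by
    refine (integrable_exp_neg_mul_sq_norm_prod hm hm_lt).mono
      (Measurable.aestronglyMeasurable ?_) (ae_of_all _ fun z => ?_)
    · simp only [Circle.smul_def, fourierChar_apply]
      fun_prop
    · rw [Circle.norm_smul, Complex.norm_real]
  calc 𝓕 (fun x : E => (gaussianMixture m x : ℂ)) ξ
      = ∫ x, ∫ b, 𝐞 (-⟪x, ξ⟫) • (rexp (-b * ‖x‖ ^ 2) : ℂ) ∂m := by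
        simp only [Real.fourier_eq, gaussianMixture, ← integral_complex_ofReal, Circle.smul_def,
          integral_smul]
    _ = ∫ b, 𝓕 (fun x : E => (rexp (-b * ‖x‖ ^ 2) : ℂ)) ξ ∂m := integral_integral_swap hint
    _ = _ := by
        refine integral_congr_ae ?_
        filter_upwards [hm] with b hb
        have hgauss := fourier_gaussian_innerProductSpace (b := b) (by simpa using hb) ξ
        push_cast [Complex.ofReal_cpow (show 0 ≤ π / b by positivity)]
        rw [hgauss]
        congr 2
        ring

theorem enorm_fourier_gaussianMixture_le (hm : ∀ᵐ b ∂m, 0 < b)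
    (hm_lt : ∫⁻ b, ENNReal.ofReal (b ^ (-(finrank ℝ E / 2 : ℝ))) ∂m < ∞) (ξ : E) :
    ‖𝓕 (fun x : E => (gaussianMixture m x : ℂ)) ξ‖ₑ ≤
      ∫⁻ b, ENNReal.ofReal ((π / b) ^ (finrank ℝ E / 2 : ℝ)) *
        ENNReal.ofReal (rexp (-(π ^ 2 / b) * ‖ξ‖ ^ 2)) ∂m := by
  rw [fourier_gaussianMixture hm hm_lt]
  refine (enorm_integral_le_lintegral_enorm _).trans_eq (lintegral_congr_ae ?_)
  filter_upwards [hm] with b hb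
  rw [← ofReal_norm, Complex.norm_real, norm_of_nonneg (by positivity),
    ENNReal.ofReal_mul (by positivity)]

theorem lintegral_enorm_fourier_gaussianMixture_mul_lconvolution_le (hm : ∀ᵐ b ∂m, 0 < b)
    (hm_lt : ∫⁻ b, ENNReal.ofReal (b ^ (-(finrank ℝ E / 2 : ℝ))) ∂m < ∞) {f g : E → ℝ≥0∞}
    (hf : Measurable f) (hg : Measurable g) {q : ℝ≥0∞} (hq₁ : 1 ≤ q) (hq₂ : q ≤ 2) :
    ∫⁻ ξ : E, ‖𝓕 (fun x : E => (gaussianMixture m x : ℂ)) ξ‖ₑ * (f ⋆ₗ[volume] g) ξ ≤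
      (∫⁻ b, ENNReal.ofReal ((π / b) ^ (finrank ℝ E * (q.toReal⁻¹ - 1 / 2))) ∂m) *
        (eLpNorm f q volume * eLpNorm g q volume) := by
  have : Measurable (f ⋆ₗ[volume] g) := measurable_lconvolution _ hf hg
  calc ∫⁻ ξ : E, ‖𝓕 (fun x : E => (gaussianMixture m x : ℂ)) ξ‖ₑ * (f ⋆ₗ[volume] g) ξ
      ≤ ∫⁻ ξ : E, ∫⁻ b, ENNReal.ofReal ((π / b) ^ (finrank ℝ E / 2 : ℝ)) *
          ENNReal.ofReal (rexp (-(π ^ 2 / b) * ‖ξ‖ ^ 2)) * (f ⋆ₗ[volume] g) ξ ∂m := by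
        refine lintegral_mono fun ξ => ?_
        rw [lintegral_mul_const _ (by fun_prop)]
        gcongr
        exact enorm_fourier_gaussianMixture_le hm hm_lt ξ
    _ = ∫⁻ b, ENNReal.ofReal ((π / b) ^ (finrank ℝ E / 2 : ℝ)) *
          (∫⁻ ξ : E, ENNReal.ofReal (rexp (-(π ^ 2 / b) * ‖ξ‖ ^ 2)) * (f ⋆ₗ[volume] g) ξ) ∂m := by
        rw [lintegral_lintegral_swap (by unfold Function.uncurry; fun_prop)]
        refine lintegral_congr fun b => ?_
        rw [← lintegral_const_mul _ (by fun_prop)]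
        simp only [mul_assoc]
    _ ≤ ∫⁻ b, ENNReal.ofReal ((π / b) ^ (finrank ℝ E * (q.toReal⁻¹ - 1 / 2))) *
          (eLpNorm f q volume * eLpNorm g q volume) ∂m := by
        refine lintegral_mono_ae ?_
        filter_upwards [hm] with b hb
        refine (mul_le_mul_right (lintegral_exp_neg_mul_sq_norm_mul_lconvolution_le hf hg hq₁ hq₂
          (by positivity)) _).trans_eq ?_
        rw [← mul_assoc, ← ENNReal.ofReal_mul (by positivity),
          show π / (π ^ 2 / b) = (π / b) ^ (-1 : ℝ) by rw [rpow_neg_one]; field_simp,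
          ← rpow_mul (by positivity), ← rpow_add (by positivity)]
        ring_nf
    _ = _ := lintegral_mul_const _ (by fun_prop)

end GaussianMixture

section Subordination

open ProbabilityTheory Set

theorem injOn_sub_div_Ioi {c : ℝ} (hc : 0 < c) : InjOn (fun z => z - c / z) (Ioi 0) := by
  refine StrictMonoOn.injOn fun x hx y _ hxy => ?_
  have : c / y < c / x := div_lt_div_of_pos_left hc hx hxy
  linarith

theorem image_sub_div_Ioi {c : ℝ} (hc : 0 < c) : (fun z => z - c / z) '' Ioi 0 = univ := by
  refine eq_univ_of_forall fun x => ?_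
  have hroot : 0 < x + √(x ^ 2 + 4 * c) := by
    have : √(x ^ 2) < √(x ^ 2 + 4 * c) := sqrt_lt_sqrt (sq_nonneg x) (by linarith)
    rw [sqrt_sq_eq_abs] at this
    linarith [neg_abs_le x]
  refine ⟨(x + √(x ^ 2 + 4 * c)) / 2, half_pos hroot, ?_⟩
  have hsq := sq_sqrt (show 0 ≤ x ^ 2 + 4 * c by positivity)
  field_simp
  linarith

theorem image_neg_div_Ioi {c : ℝ} (hc : 0 < c) : (fun z => -c / z) '' Ioi 0 = Iio 0 := by
  ext x
  constructor
  · rintro ⟨z, hz, rfl⟩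
    exact div_neg_of_neg_of_pos (neg_neg_of_pos hc) hz
  · intro hx
    exact ⟨-c / x, div_pos_of_neg_of_neg (neg_neg_of_pos hc) hx,
      div_div_cancel₀ (neg_ne_zero.2 hc.ne')⟩

/-- Boole's identity: the two branches of `z ↦ z - c / z` share their values via `z ↦ -c / z`. -/
theorem lintegral_comp_sub_div {c : ℝ} (hc : 0 < c) {f : ℝ → ℝ≥0∞} (hf : Measurable f) :
    ∫⁻ z, f (z - c / z) = ∫⁻ z, f z := by
  have hasDeriv_div (z : ℝ) (hz : z ∈ Ioi 0) :
      HasDerivWithinAt (fun z => -c / z) (c / z ^ 2) (Ioi 0) z := by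
    simpa [div_eq_mul_inv] using
      ((hasDerivAt_inv (ne_of_gt hz)).const_mul (-c)).hasDerivWithinAt
  have hasDeriv_sub (z : ℝ) (hz : z ∈ Ioi 0) :
      HasDerivWithinAt (fun z => z - c / z) (1 + c / z ^ 2) (Ioi 0) z :=
    ((hasDerivWithinAt_id z _).add (hasDeriv_div z hz)).congr_of_mem
      (fun z _ => by simp only [id, Pi.add_apply, neg_div, sub_eq_add_neg]) hz
  have neg_part : ∫⁻ z in Iio 0, f (z - c / z) =
      ∫⁻ z in Ioi 0, ENNReal.ofReal (c / z ^ 2) * f (z - c / z) := by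
    have injOn_div : InjOn (fun z => -c / z) (Ioi 0) :=
      LeftInvOn.injOn fun _ _ => div_div_cancel₀ (neg_ne_zero.2 hc.ne')
    rw [← image_neg_div_Ioi hc,
      lintegral_image_eq_lintegral_abs_deriv_mul measurableSet_Ioi hasDeriv_div injOn_div]
    refine setLIntegral_congr_fun measurableSet_Ioi fun z (hz : 0 < z) => ?_
    rw [abs_of_pos (by positivity), show -c / z - c / (-c / z) = z - c / z by field_simp; ring]
  calc ∫⁻ z, f (z - c / z)
      = ∫⁻ z in Ioi 0, f (z - c / z) + ENNReal.ofReal (c / z ^ 2) * f (z - c / z) := by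
        rw [lintegral_add_left (by fun_prop), ← neg_part, ← lintegral_add_compl _ measurableSet_Ioi,
          compl_Ioi, setLIntegral_congr Iio_ae_eq_Iic]
    _ = ∫⁻ z in (fun z => z - c / z) '' Ioi 0, f z := by
        rw [lintegral_image_eq_lintegral_abs_deriv_mul measurableSet_Ioi hasDeriv_sub
          (injOn_sub_div_Ioi hc)]
        refine setLIntegral_congr_fun measurableSet_Ioi fun z (hz : 0 < z) => ?_
        rw [abs_of_pos (by positivity), ENNReal.ofReal_add one_pos.le (by positivity), add_mul,
          ENNReal.ofReal_one, one_mul]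
    _ = ∫⁻ z, f z := by rw [image_sub_div_Ioi hc, setLIntegral_univ]

theorem lintegral_exp_neg_sq_div_gaussianReal {t : ℝ} (ht : 0 < t) :
    ∫⁻ z, ENNReal.ofReal (rexp (-(t ^ 2 / (2 * z ^ 2)))) ∂gaussianReal 0 1 =
      ENNReal.ofReal (rexp (-t)) := by
  have complete_square : ∀ᵐ z, gaussianPDF 0 1 z * ENNReal.ofReal (rexp (-(t ^ 2 / (2 * z ^ 2)))) =
      ENNReal.ofReal (rexp (-t)) * gaussianPDF 0 1 (z - t / z) := by
    filter_upwards [Measure.ae_ne volume (0 : ℝ)] with z hz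
    simp only [gaussianPDF, gaussianPDFReal]
    rw [← ENNReal.ofReal_mul (by positivity), ← ENNReal.ofReal_mul (by positivity), mul_assoc,
      mul_left_comm (rexp (-t)), ← exp_add, ← exp_add]
    congr 3
    push_cast
    field_simp
    ring
  rw [gaussianReal_of_var_ne_zero _ one_ne_zero,
    lintegral_withDensity_eq_lintegral_mul _ (measurable_gaussianPDF _ _) (by fun_prop)]
  simp only [Pi.mul_apply]
  rw [lintegral_congr_ae complete_square, lintegral_const_mul _ (by fun_prop),
    lintegral_comp_sub_div ht (measurable_gaussianPDF _ _),
    lintegral_gaussianPDF_eq_one _ one_ne_zero, mul_one]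

end Subordination

section Yukawa

open ProbabilityTheory Set

/-- The measure `s^(γ-1) ds / Γ(γ)` on `(0, ∞)`, whose Laplace transform is `t ↦ t^(-γ)`. -/
noncomputable def laplaceMixing (γ : ℝ) : Measure ℝ :=
  (volume.restrict (Ioi 0)).withDensity fun s => ENNReal.ofReal (s ^ (γ - 1) / Gamma γ)

instance (γ : ℝ) : SFinite (laplaceMixing γ) :=
  inferInstanceAs (SFinite (Measure.withDensity _ _))

theorem ae_pos_laplaceMixing (γ : ℝ) : ∀ᵐ s ∂laplaceMixing γ, 0 < s :=
  (withDensity_absolutelyContinuous _ _).ae_le (ae_restrict_mem measurableSet_Ioi)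

theorem lintegral_laplaceMixing (γ : ℝ) {f : ℝ → ℝ≥0∞} (hf : Measurable f) :
    ∫⁻ s, f s ∂laplaceMixing γ = ∫⁻ s in Ioi 0, ENNReal.ofReal (s ^ (γ - 1) / Gamma γ) * f s :=
  lintegral_withDensity_eq_lintegral_mul _ (by fun_prop) hf

theorem lintegral_rpow_mul_exp_neg_mul_Ioi {γ t : ℝ} (hγ : 0 < γ) (ht : 0 < t) :
    ∫⁻ s in Ioi 0, ENNReal.ofReal (s ^ (γ - 1) * rexp (-(t * s))) =
      ENNReal.ofReal (t ^ (-γ) * Gamma γ) := by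
  refine lintegral_ofReal_eq_of_integral_eq ?_ (by positivity) ?_
  · filter_upwards [ae_restrict_mem measurableSet_Ioi] with s (hs : 0 < s)
    rw [Pi.zero_apply]
    positivity
  · rw [integral_rpow_mul_exp_neg_mul_Ioi hγ ht, one_div, inv_rpow ht.le, rpow_neg ht.le]

theorem lintegral_exp_neg_mul_laplaceMixing {γ t : ℝ} (hγ : 0 < γ) (ht : 0 < t) :
    ∫⁻ s, ENNReal.ofReal (rexp (-(t * s))) ∂laplaceMixing γ = ENNReal.ofReal (t ^ (-γ)) := by
  have hΓ := Gamma_pos_of_pos hγ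
  have density_mul_exp (s : ℝ) (hs : s ∈ Ioi 0) :
      ENNReal.ofReal (s ^ (γ - 1) / Gamma γ) * ENNReal.ofReal (rexp (-(t * s))) =
        ENNReal.ofReal (Gamma γ)⁻¹ * ENNReal.ofReal (s ^ (γ - 1) * rexp (-(t * s))) := by
    rw [mem_Ioi] at hs
    rw [← ENNReal.ofReal_mul (by positivity), ← ENNReal.ofReal_mul (by positivity)]
    congr 1
    ring
  rw [lintegral_laplaceMixing _ (by fun_prop),
    setLIntegral_congr_fun measurableSet_Ioi density_mul_exp, lintegral_const_mul _ (by fun_prop),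
    lintegral_rpow_mul_exp_neg_mul_Ioi hγ ht, ← ENNReal.ofReal_mul (by positivity),
    mul_comm, mul_inv_cancel_right₀ hΓ.ne']

/-- Expand `(s + a)^(-β)` as a Laplace transform and integrate in `s` first. -/
theorem lintegral_add_rpow_neg_laplaceMixing_lt_top {γ β a : ℝ} (hγ : 0 < γ) (hγβ : γ < β)
    (ha : 0 < a) : ∫⁻ s, ENNReal.ofReal ((s + a) ^ (-β)) ∂laplaceMixing γ < ∞ := by
  have hβ : 0 < β := hγ.trans hγβ
  calc ∫⁻ s, ENNReal.ofReal ((s + a) ^ (-β)) ∂laplaceMixing γ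
      = ∫⁻ s, ∫⁻ r, ENNReal.ofReal (rexp (-((s + a) * r))) ∂laplaceMixing β ∂laplaceMixing γ := by
        refine lintegral_congr_ae ?_
        filter_upwards [ae_pos_laplaceMixing γ] with s hs
        rw [lintegral_exp_neg_mul_laplaceMixing hβ (by positivity)]
    _ = ∫⁻ r, ENNReal.ofReal (rexp (-(a * r))) * ENNReal.ofReal (r ^ (-γ)) ∂laplaceMixing β := by
        rw [lintegral_lintegral_swap (by unfold Function.uncurry; fun_prop)]
        refine lintegral_congr_ae ?_
        filter_upwards [ae_pos_laplaceMixing β] with r hr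
        rw [← lintegral_exp_neg_mul_laplaceMixing hγ hr, ← lintegral_const_mul _ (by fun_prop)]
        refine lintegral_congr fun s => ?_
        rw [← ENNReal.ofReal_mul (exp_pos _).le, ← exp_add]
        ring_nf
    _ = ENNReal.ofReal (Gamma β)⁻¹ *
          ∫⁻ r in Ioi 0, ENNReal.ofReal (r ^ (β - γ - 1) * rexp (-(a * r))) := by
        rw [lintegral_laplaceMixing _ (by fun_prop), ← lintegral_const_mul _ (by fun_prop)]
        refine setLIntegral_congr_fun measurableSet_Ioi fun r (hr : 0 < r) => ?_
        rw [← ENNReal.ofReal_mul (by positivity), ← ENNReal.ofReal_mul (by positivity),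
          ← ENNReal.ofReal_mul (by positivity), sub_right_comm, sub_eq_add_neg (β - 1),
          rpow_add hr]
        congr 1
        ring
    _ < ∞ := by
        rw [lintegral_rpow_mul_exp_neg_mul_Ioi (sub_pos.2 hγβ) ha]
        exact ENNReal.mul_lt_top ENNReal.ofReal_lt_top ENNReal.ofReal_lt_top

/-- The law of `b = (s + a)² / (2 z²)` for `s` distributed by `laplaceMixing γ` and `z` by the
standard normal law: the Yukawa potential is the mixture of the Gaussians `e^{-b|x|²}` over it. -/
noncomputable def yukawaMixing (a γ : ℝ) : Measure ℝ :=
  ((laplaceMixing γ).prod (gaussianReal 0 1)).map fun w => (w.1 + a) ^ 2 / (2 * w.2 ^ 2)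

instance (a γ : ℝ) : SFinite (yukawaMixing a γ) :=
  inferInstanceAs (SFinite (Measure.map _ _))

theorem lintegral_yukawaMixing (a γ : ℝ) {f : ℝ → ℝ≥0∞} (hf : Measurable f) :
    ∫⁻ b, f b ∂yukawaMixing a γ =
      ∫⁻ s, ∫⁻ z, f ((s + a) ^ 2 / (2 * z ^ 2)) ∂gaussianReal 0 1 ∂laplaceMixing γ := by
  rw [yukawaMixing, lintegral_map hf (by fun_prop), lintegral_prod _ (by fun_prop)]

theorem ae_pos_yukawaMixing {a : ℝ} (ha : 0 < a) (γ : ℝ) : ∀ᵐ b ∂yukawaMixing a γ, 0 < b := by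
  have := nullSingletonClass_gaussianReal (μ := 0) (v := 1) one_ne_zero
  rw [yukawaMixing, ae_map_iff (by fun_prop) measurableSet_Ioi]
  filter_upwards [Measure.quasiMeasurePreserving_fst.ae (ae_pos_laplaceMixing γ),
    Measure.quasiMeasurePreserving_snd.ae (Measure.ae_ne (gaussianReal 0 1) 0)] with w hs hz
  positivity

theorem lintegral_exp_neg_mul_sq_yukawaMixing {a γ t : ℝ} (ha : 0 < a) (hγ : 0 < γ) (ht : 0 < t) :
    ∫⁻ b, ENNReal.ofReal (rexp (-b * t ^ 2)) ∂yukawaMixing a γ =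
      ENNReal.ofReal (rexp (-(a * t)) * t ^ (-γ)) := by
  rw [lintegral_yukawaMixing _ _ (by fun_prop), ENNReal.ofReal_mul (exp_pos _).le,
    ← lintegral_exp_neg_mul_laplaceMixing hγ ht, ← lintegral_const_mul _ (by fun_prop)]
  refine lintegral_congr_ae ?_
  filter_upwards [ae_pos_laplaceMixing γ] with s hs
  rw [← ENNReal.ofReal_mul (exp_pos _).le, ← exp_add,
    show -(a * t) + -(t * s) = -((s + a) * t) by ring,
    ← lintegral_exp_neg_sq_div_gaussianReal (by positivity)]
  refine lintegral_congr fun z => ?_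
  ring_nf

theorem lintegral_abs_rpow_gaussianReal_lt_top {r : ℝ} (hr : 0 < r) :
    ∫⁻ z, ENNReal.ofReal (|z| ^ r) ∂gaussianReal 0 1 < ∞ := by
  have h := (memLp_id_gaussianReal (μ := 0) (v := 1) r.toNNReal).integrable_norm_rpow
    (by simpa using hr) ENNReal.coe_ne_top
  rw [ENNReal.coe_toReal, coe_toNNReal _ hr.le] at h
  exact h.lintegral_lt_top

theorem lintegral_rpow_neg_yukawaMixing_lt_top {a γ κ : ℝ} (ha : 0 < a) (hγ : 0 < γ)
    (hκ : γ < 2 * κ) : ∫⁻ b, ENNReal.ofReal (b ^ (-κ)) ∂yukawaMixing a γ < ∞ := by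
  have := nullSingletonClass_gaussianReal (μ := 0) (v := 1) one_ne_zero
  have hsplit {s z : ℝ} (hs : 0 < s) (hz : z ≠ 0) : ((s + a) ^ 2 / (2 * z ^ 2)) ^ (-κ) =
      2 ^ κ * (s + a) ^ (-(2 * κ)) * |z| ^ (2 * κ) := by
    rw [← sq_abs z, rpow_neg (by positivity), ← inv_rpow (by positivity), inv_div,
      div_rpow (by positivity) (by positivity), mul_rpow (by positivity) (by positivity),
      rpow_neg (by positivity), rpow_mul (by positivity), rpow_mul (by positivity), rpow_two,
      rpow_two, div_eq_mul_inv, mul_right_comm]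
  rw [lintegral_yukawaMixing _ _ (by fun_prop)]
  calc ∫⁻ s, ∫⁻ z, ENNReal.ofReal (((s + a) ^ 2 / (2 * z ^ 2)) ^ (-κ)) ∂gaussianReal 0 1
        ∂laplaceMixing γ
      = ∫⁻ s, ENNReal.ofReal (2 ^ κ) * ENNReal.ofReal ((s + a) ^ (-(2 * κ))) *
          (∫⁻ z, ENNReal.ofReal (|z| ^ (2 * κ)) ∂gaussianReal 0 1) ∂laplaceMixing γ := by
        refine lintegral_congr_ae ?_
        filter_upwards [ae_pos_laplaceMixing γ] with s hs
        rw [← lintegral_const_mul _ (by fun_prop)]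
        refine lintegral_congr_ae ?_
        filter_upwards [Measure.ae_ne (gaussianReal 0 1) 0] with z hz
        rw [hsplit hs hz, ENNReal.ofReal_mul (by positivity), ENNReal.ofReal_mul (by positivity)]
    _ = ENNReal.ofReal (2 ^ κ) * (∫⁻ s, ENNReal.ofReal ((s + a) ^ (-(2 * κ))) ∂laplaceMixing γ) *
          ∫⁻ z, ENNReal.ofReal (|z| ^ (2 * κ)) ∂gaussianReal 0 1 := by
        rw [lintegral_mul_const _ (by fun_prop), lintegral_const_mul _ (by fun_prop)]
    _ < ∞ := ENNReal.mul_lt_top (ENNReal.mul_lt_top ENNReal.ofReal_lt_top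
        (lintegral_add_rpow_neg_laplaceMixing_lt_top hγ hκ ha))
        (lintegral_abs_rpow_gaussianReal_lt_top (hγ.trans hκ))

theorem lintegral_pi_div_rpow_yukawaMixing_lt_top {a γ κ : ℝ} (ha : 0 < a) (hγ : 0 < γ)
    (hκ : γ < 2 * κ) : ∫⁻ b, ENNReal.ofReal ((π / b) ^ κ) ∂yukawaMixing a γ < ∞ := by
  have pull_out : ∀ᵐ b ∂yukawaMixing a γ, ENNReal.ofReal ((π / b) ^ κ) =
      ENNReal.ofReal (π ^ κ) * ENNReal.ofReal (b ^ (-κ)) := by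
    filter_upwards [ae_pos_yukawaMixing ha γ] with b hb
    rw [← ENNReal.ofReal_mul (by positivity), div_rpow pi_pos.le hb.le, rpow_neg hb.le,
      div_eq_mul_inv]
  rw [lintegral_congr_ae pull_out, lintegral_const_mul _ (by fun_prop)]
  exact ENNReal.mul_lt_top ENNReal.ofReal_lt_top (lintegral_rpow_neg_yukawaMixing_lt_top ha hγ hκ)

theorem gaussianMixture_yukawaMixing {E : Type*} [NormedAddCommGroup E] {a γ : ℝ} (ha : 0 < a)
    (hγ : 0 < γ) {x : E} (hx : x ≠ 0) :
    gaussianMixture (yukawaMixing a γ) x = rexp (-(a * ‖x‖)) * ‖x‖ ^ (-γ) := by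
  rw [gaussianMixture, integral_eq_lintegral_of_nonneg_ae (ae_of_all _ fun _ => (exp_pos _).le)
    (Measurable.aestronglyMeasurable (by fun_prop)),
    lintegral_exp_neg_mul_sq_yukawaMixing ha hγ (norm_pos_iff.2 hx),
    ENNReal.toReal_ofReal (by positivity)]

end Yukawa

section Hartree

open Module
open scoped SchwartzMap

theorem eLpNorm_fourier_integral_gaussianMixture_mul_smul_le {E F : Type*} [NormedAddCommGroup E]
    [InnerProductSpace ℝ E] [FiniteDimensional ℝ E] [MeasurableSpace E] [BorelSpace E]
    [NormedAddCommGroup F] [NormedSpace ℂ F] [CompleteSpace F]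
    {m : Measure ℝ} [SFinite m] (hm : ∀ᵐ b ∂m, 0 < b)
    (hm_lt : ∫⁻ b, ENNReal.ofReal (b ^ (-(finrank ℝ E / 2 : ℝ))) ∂m < ∞) {q : ℝ≥0∞}
    (hq₁ : 1 ≤ q) (hq₂ : q ≤ 2) (f g : 𝓢(E, ℂ)) (h : 𝓢(E, F)) :
    eLpNorm (𝓕 fun x : E =>
        (∫ y, (gaussianMixture m y : ℂ) * schwartzMulConj f g (x - y)) • h x) q ≤
      (∫⁻ b, ENNReal.ofReal ((π / b) ^ (finrank ℝ E * (q.toReal⁻¹ - 1 / 2))) ∂m) *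
        eLpNorm (𝓕 (⇑f)) q * eLpNorm (𝓕 (⇑g)) q * eLpNorm (𝓕 (⇑h)) q := by
  have hK : Integrable fun x : E => (gaussianMixture m x : ℂ) :=
    (integrable_gaussianMixture hm hm_lt).ofReal
  have hf_cont := continuous_fourier_of_integrable (f.integrable (μ := volume))
  have hg_cont := continuous_fourier_of_integrable (g.integrable (μ := volume))
  have eLpNorm_reflect : eLpNorm (fun η => ‖𝓕 (⇑g) (-η)‖ₑ) q = eLpNorm (𝓕 (⇑g)) q :=
    (eLpNorm_enorm _).trans (eLpNorm_comp_measurePreserving hg_cont.aestronglyMeasurable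
      (Measure.measurePreserving_neg volume))
  refine (eLpNorm_fourier_integral_mul_smul_le hK (schwartzMulConj f g) h.integrable hq₁
    (ne_top_of_le_ne_top ENNReal.ofNat_ne_top hq₂)).trans ?_
  gcongr
  calc ∫⁻ η : E, ‖𝓕 (fun x : E => (gaussianMixture m x : ℂ)) η‖ₑ *
        ‖𝓕 (⇑(schwartzMulConj f g)) η‖ₑ
      ≤ ∫⁻ η : E, ‖𝓕 (fun x : E => (gaussianMixture m x : ℂ)) η‖ₑ *
          ((fun η => ‖𝓕 (⇑f) η‖ₑ) ⋆ₗ[volume] fun η => ‖𝓕 (⇑g) (-η)‖ₑ) η := by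
        gcongr with η
        exact enorm_fourier_schwartzMulConj_le f g η
    _ ≤ (∫⁻ b, ENNReal.ofReal ((π / b) ^ (finrank ℝ E * (q.toReal⁻¹ - 1 / 2))) ∂m) *
          (eLpNorm (𝓕 (⇑f)) q * eLpNorm (𝓕 (⇑g)) q) := by
        rw [← eLpNorm_reflect, ← eLpNorm_enorm (𝓕 (⇑f))]
        exact lintegral_enorm_fourier_gaussianMixture_mul_lconvolution_le hm hm_lt
          hf_cont.enorm.measurable (hg_cont.comp continuous_neg).enorm.measurable hq₁ hq₂
    _ = _ := by rw [mul_assoc]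

theorem hartreeOp_eq_integral_gaussianMixture {d : ℕ} (hd : 1 ≤ d) {a γ : ℝ} (ha : 0 < a)
    (hγ : 0 < γ) (f g h : 𝓢(EuclideanSpace ℝ (Fin d), ℂ)) :
    hartreeOp d a γ f g h = fun x =>
      (∫ y, (gaussianMixture (yukawaMixing a γ) y : ℂ) * schwartzMulConj f g (x - y)) • h x := by
  have : Nonempty (Fin d) := ⟨⟨0, hd⟩⟩
  funext x
  rw [hartreeOp, smul_eq_mul]
  congr 1
  refine integral_congr_ae ?_
  filter_upwards [Measure.ae_ne volume (0 : EuclideanSpace ℝ (Fin d))] with y hy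
  rw [gaussianMixture_yukawaMixing ha hγ hy, coe_schwartzMulConj]

theorem le_two_of_holderConjugate (p q : ℝ≥0∞) [p.HolderConjugate q] (hp : 2 ≤ p) : q ≤ 2 := by
  rw [← ENNReal.inv_le_inv, ← ENNReal.HolderConjugate.one_sub_inv p q, ← ENNReal.one_sub_inv_two]
  gcongr

theorem toReal_inv_of_holderConjugate (p q : ℝ≥0∞) [p.HolderConjugate q] :
    q.toReal⁻¹ = 1 - p.toReal⁻¹ := by
  have hp : p⁻¹ ≤ 1 := ENNReal.inv_le_one.2 (ENNReal.HolderConjugate.one_le p q)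
  rw [← ENNReal.toReal_inv, ← ENNReal.HolderConjugate.one_sub_inv p q,
    ENNReal.toReal_sub_of_le hp ENNReal.one_ne_top, ENNReal.toReal_inv, ENNReal.toReal_one]

end Hartree

/-- For `2 < p ≤ ∞`, `0 < γ < 2d(1/2 - 1/p)` and `a > 0` (Yukawa-type potential):
`‖H_{a,γ}(f₁,f₂,f₃)‖_{L̂^p} ≤ C ‖f₁‖_{L̂^p} ‖f₂‖_{L̂^p} ‖f₃‖_{L̂^p}` for Schwartz
functions, where `‖f‖_{L̂^p} = ‖𝓕 f‖_{L^{p'}}` with `1/p + 1/p' = 1`. -/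
theorem hartree_fourier_lebesgue_estimate_yukawa (d : ℕ) (hd : 1 ≤ d)
    (p p' : ℝ≥0∞) (hp : 2 < p) (hpp' : 1 / p + 1 / p' = 1)
    (γ : ℝ) (hγ0 : 0 < γ) (hγ : γ < 2 * d * (1 / 2 - 1 / p.toReal))
    (a : ℝ) (ha : 0 < a) :
    ∃ C : ℝ, 0 < C ∧
      ∀ f₁ f₂ f₃ : SchwartzMap (EuclideanSpace ℝ (Fin d)) ℂ,
        eLpNorm (𝓕 (hartreeOp d a γ (⇑f₁) (⇑f₂) (⇑f₃))) p' volume ≤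
          ENNReal.ofReal C * eLpNorm (𝓕 (⇑f₁)) p' volume *
            eLpNorm (𝓕 (⇑f₂)) p' volume * eLpNorm (𝓕 (⇑f₃)) p' volume := by
  have : p.HolderConjugate p' := ENNReal.holderConjugate_iff.2 (by simpa only [one_div] using hpp')
  have hκ : γ < 2 * (d * (p'.toReal⁻¹ - 1 / 2)) := by
    rw [toReal_inv_of_holderConjugate p p', ← one_div p.toReal]
    linarith
  have hγd : γ < 2 * (d / 2) := by
    have : 0 ≤ d * (1 / p.toReal) := by positivity
    linarith
  have D_lt_top := lintegral_pi_div_rpow_yukawaMixing_lt_top ha hγ0 hκ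
  set D := ∫⁻ b, ENNReal.ofReal ((π / b) ^ (d * (p'.toReal⁻¹ - 1 / 2))) ∂yukawaMixing a γ
  refine ⟨D.toReal + 1, by positivity, fun f₁ f₂ f₃ => ?_⟩
  have D_le : D ≤ ENNReal.ofReal (D.toReal + 1) :=
    (ENNReal.le_ofReal_iff_toReal_le D_lt_top.ne (by positivity)).2 (by linarith)
  have hartree_le := eLpNorm_fourier_integral_gaussianMixture_mul_smul_le (ae_pos_yukawaMixing ha γ)
    (by simpa only [finrank_euclideanSpace_fin] using
      lintegral_rpow_neg_yukawaMixing_lt_top ha hγ0 hγd)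
    (ENNReal.HolderConjugate.one_le p' p) (le_two_of_holderConjugate p p' hp.le) f₁ f₂ f₃
  rw [← hartreeOp_eq_integral_gaussianMixture hd ha hγ0, finrank_euclideanSpace_fin] at hartree_le
  exact hartree_le.trans (by gcongr)
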